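/- arXiv:2012.02239 — 2 statements merged into one kernel-verified Lean document; each statement's English description precedes it below -/
import Mathlib

section
/- Fix a rewrite order ⊴. Let G ⊆ R^m be finite with 0 ∉ G and such that no two distinct elements of G have the same signature, and let u be a term. Assume: (i) for all g_1, g_2 ∈ G that give rise to a regular S-pair with 𝔰(spair(g_1,g_2)) ≺_t u, the set G is a rewrite basis in 𝔰(spair(g_1,g_2)); and (ii) for every i ∈ {1,…,m} with e_i ≺_t u, the set G is a rewrite basis in the term e_i. Then G is a rewrite basis up to u. -/
namespace SigGB

noncomputable section

/-- Power-products in `n` indeterminates, written additively as exponent vectors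
(so the power-product `1` is `0`, and multiplication of power-products is `+`). -/
abbrev PP (n : ℕ) : Type := Fin n →₀ ℕ

/-- Terms: a power-product together with a component index (`t·e_i ↝ (t, i)`). -/
abbrev Term (n m : ℕ) : Type := PP n × Fin m

/-- Multiplication of a term by a power-product: `t ⊗ (s·e_i) = (t·s)·e_i`. -/
def mulTerm {n m : ℕ} (t : PP n) (u : Term n m) : Term n m := (t + u.1, u.2)

/-- Divisibility of terms: `u ∣ v` iff `v = t ⊗ u` for some power-product `t`. -/
def termDvd {n m : ℕ} (u v : Term n m) : Prop := ∃ t : PP n, v = mulTerm t u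

/-- Componentwise lcm of power-products. -/
noncomputable def lcmPP {n : ℕ} (s t : PP n) : PP n := Finsupp.zipWith max (max_self 0) s t

/-- Strict part of a relation. -/
def strict {α : Type*} (r : α → α → Prop) (x y : α) : Prop := r x y ∧ x ≠ y

/-- `ple` is an admissible order on power-products and `tle` is a compatible
linear order on terms. -/
structure OrdersOK {n m : ℕ} (ple : PP n → PP n → Prop)
    (tle : Term n m → Term n m → Prop) : Prop where
  ple_refl : ∀ t, ple t t
  ple_trans : ∀ s t u, ple s t → ple t u → ple s u
  ple_antisymm : ∀ s t, ple s t → ple t s → s = t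
  ple_total : ∀ s t, ple s t ∨ ple t s
  ple_one_le : ∀ t, ple 0 t
  ple_mul : ∀ (t s₁ s₂ : PP n), ple s₁ s₂ → ple (t + s₁) (t + s₂)
  tle_refl : ∀ u, tle u u
  tle_trans : ∀ u v w, tle u v → tle v w → tle u w
  tle_antisymm : ∀ u v, tle u v → tle v u → u = v
  tle_total : ∀ u v, tle u v ∨ tle v u
  tle_mul : ∀ (t : PP n) (u v : Term n m), tle u v → tle (mulTerm t u) (mulTerm t v)
  tle_compat : ∀ (s t : PP n) (i j : Fin m), ple s t → i ≤ j → tle (s, i) (t, j)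

variable {K : Type*} [Field K] {n m : ℕ} [NeZero m]

variable (f : Fin m → MvPolynomial (Fin n) K)
variable (ple : PP n → PP n → Prop)
variable (tle : Term n m → Term n m → Prop)

/-- The module homomorphism `R^m → R` determined by `e_i ↦ f i`, i.e. `a ↦ ‾a`. -/
def bar (a : Fin m → MvPolynomial (Fin n) K) : MvPolynomial (Fin n) K := ∑ i, a i * f i

/-- Multiplication of a module element by a coefficient `c` and a power-product `t`. -/
noncomputable def monomMul (c : K) (t : PP n) (a : Fin m → MvPolynomial (Fin n) K) :
    Fin m → MvPolynomial (Fin n) K :=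
  fun i => MvPolynomial.monomial t c * a i

/-- The coefficient of a term in a module element. -/
def coeffM (a : Fin m → MvPolynomial (Fin n) K) (u : Term n m) : K :=
  MvPolynomial.coeff u.1 (a u.2)

open Classical in
/-- Leading power-product of a polynomial w.r.t. `ple`
(junk value `0`, i.e. the power-product `1`, for the zero polynomial). -/
noncomputable def lp (p : MvPolynomial (Fin n) K) : PP n :=
  if h : ∃ t, MvPolynomial.coeff t p ≠ 0 ∧ ∀ s, MvPolynomial.coeff s p ≠ 0 → ple s t
  then h.choose else 0

/-- Leading coefficient of a polynomial w.r.t. `ple`. -/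
noncomputable def lc (p : MvPolynomial (Fin n) K) : K := MvPolynomial.coeff (lp ple p) p

open Classical in
/-- Signature of a module element: its `tle`-largest term with nonzero coefficient
(junk value for `0`). -/
noncomputable def sig (a : Fin m → MvPolynomial (Fin n) K) : Term n m :=
  if h : ∃ u, coeffM a u ≠ 0 ∧ ∀ v, coeffM a v ≠ 0 → tle v u
  then h.choose else ((0 : PP n), (0 : Fin m))

/-- Leading coefficient of a module element. -/
noncomputable def lcM (a : Fin m → MvPolynomial (Fin n) K) : K := coeffM a (sig tle a)

/-- One-step s-reduction of `a` to `b` modulo `G`, witnessed by `g ∈ G` and the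
power-product `t`. -/
def RedStepWith (G : Set (Fin m → MvPolynomial (Fin n) K))
    (a b g : Fin m → MvPolynomial (Fin n) K) (t : PP n) : Prop :=
  g ∈ G ∧ bar f g ≠ 0 ∧
    MvPolynomial.coeff (t + lp ple (bar f g)) (bar f a) ≠ 0 ∧
    b = a - monomMul (MvPolynomial.coeff (t + lp ple (bar f g)) (bar f a) / lc ple (bar f g)) t g ∧
    tle (mulTerm t (sig tle g)) (sig tle a)

/-- The step witnessed by `g` and `t` is regular: `t ⊗ 𝔰(g) ≺_t 𝔰(a)`. -/
def RegularWith (a g : Fin m → MvPolynomial (Fin n) K) (t : PP n) : Prop :=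
  strict tle (mulTerm t (sig tle g)) (sig tle a)

/-- The step witnessed by `g` and `t` is top: `t·lp(‾g) = lp(‾a)`. -/
def TopWith (a g : Fin m → MvPolynomial (Fin n) K) (t : PP n) : Prop :=
  t + lp ple (bar f g) = lp ple (bar f a)

/-- `a` s-reduces to `b` modulo `G` in one step. -/
def SigRedStep (G : Set (Fin m → MvPolynomial (Fin n) K))
    (a b : Fin m → MvPolynomial (Fin n) K) : Prop :=
  ∃ g t, RedStepWith f ple tle G a b g t

/-- `a` regular s-reduces to `b` modulo `G` in one step. -/
def RegRedStep (G : Set (Fin m → MvPolynomial (Fin n) K))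
    (a b : Fin m → MvPolynomial (Fin n) K) : Prop :=
  ∃ g t, RedStepWith f ple tle G a b g t ∧ RegularWith tle a g t

/-- `a` regular top s-reduces to `b` modulo `G` in one step. -/
def RegTopRedStep (G : Set (Fin m → MvPolynomial (Fin n) K))
    (a b : Fin m → MvPolynomial (Fin n) K) : Prop :=
  ∃ g t, RedStepWith f ple tle G a b g t ∧ RegularWith tle a g t ∧ TopWith f ple a g t

/-- `a` is regular s-irreducible modulo `G`. -/
def RegIrred (G : Set (Fin m → MvPolynomial (Fin n) K))
    (a : Fin m → MvPolynomial (Fin n) K) : Prop :=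
  ∀ b, ¬ RegRedStep f ple tle G a b

/-- `a` is regular top s-irreducible modulo `G`. -/
def RegTopIrred (G : Set (Fin m → MvPolynomial (Fin n) K))
    (a : Fin m → MvPolynomial (Fin n) K) : Prop :=
  ∀ b, ¬ RegTopRedStep f ple tle G a b

/-- `a` s-reduces to zero modulo `G`. -/
def SigRedZero (G : Set (Fin m → MvPolynomial (Fin n) K))
    (a : Fin m → MvPolynomial (Fin n) K) : Prop :=
  ∃ b, Relation.ReflTransGen (SigRedStep f ple tle G) a b ∧ bar f b = 0

/-- `a` regular s-reduces to zero modulo `G`. -/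
def RegRedZero (G : Set (Fin m → MvPolynomial (Fin n) K))
    (a : Fin m → MvPolynomial (Fin n) K) : Prop :=
  ∃ b, Relation.ReflTransGen (RegRedStep f ple tle G) a b ∧ bar f b = 0

/-- `G` is a signature Gröbner basis in the term `u`. -/
def IsSigGBIn (G : Set (Fin m → MvPolynomial (Fin n) K)) (u : Term n m) : Prop :=
  ∀ a : Fin m → MvPolynomial (Fin n) K, a ≠ 0 → sig tle a = u → SigRedZero f ple tle G a

/-- `G` is a signature Gröbner basis up to the term `u`. -/
def IsSigGBUpto (G : Set (Fin m → MvPolynomial (Fin n) K)) (u : Term n m) : Prop :=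
  ∀ v, strict tle v u → IsSigGBIn f ple tle G v

/-- `u` is a syzygy signature. -/
def IsSyzSig (u : Term n m) : Prop :=
  ∃ a : Fin m → MvPolynomial (Fin n) K, a ≠ 0 ∧ sig tle a = u ∧ bar f a = 0

/-- The sig-poly-pair `(𝔰(a), ‾a)` of a module element `a`. -/
noncomputable def sppOf (a : Fin m → MvPolynomial (Fin n) K) :
    Term n m × MvPolynomial (Fin n) K :=
  (sig tle a, bar f a)

/-- `x` is a sig-poly-pair. -/
def IsSPP (x : Term n m × MvPolynomial (Fin n) K) : Prop :=
  ∃ a : Fin m → MvPolynomial (Fin n) K, a ≠ 0 ∧ sppOf f tle a = x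

/-- `ro` is a rewrite order. -/
def IsRewriteOrder
    (ro : Term n m × MvPolynomial (Fin n) K → Term n m × MvPolynomial (Fin n) K → Prop) :
    Prop :=
  (∀ x, IsSPP f tle x → ro x x) ∧
  (∀ x y z, IsSPP f tle x → IsSPP f tle y → IsSPP f tle z → ro x y → ro y z → ro x z) ∧
  (∀ x y, IsSPP f tle x → IsSPP f tle y → (ro x y ∨ ro y x)) ∧
  (∀ x y, IsSPP f tle x → IsSPP f tle y → ro x y → ro y x → x.1 = y.1) ∧
  (∀ (G : Set (Fin m → MvPolynomial (Fin n) K)) (a b : Fin m → MvPolynomial (Fin n) K),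
    IsSigGBUpto f ple tle G (sig tle b) → a ∈ G → b ∈ G → a ≠ 0 → b ≠ 0 →
    termDvd (sig tle a) (sig tle b) → RegTopIrred f ple tle G b →
    ro (sppOf f tle a) (sppOf f tle b))

/-- `a` is a canonical rewriter in the term `u` w.r.t. `G` (for the rewrite order `ro`). -/
def IsCanonRewriter
    (ro : Term n m × MvPolynomial (Fin n) K → Term n m × MvPolynomial (Fin n) K → Prop)
    (G : Set (Fin m → MvPolynomial (Fin n) K)) (u : Term n m)
    (a : Fin m → MvPolynomial (Fin n) K) : Prop :=
  a ∈ G ∧ a ≠ 0 ∧ termDvd (sig tle a) u ∧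
    ∀ g ∈ G, g ≠ 0 → termDvd (sig tle g) u → ro (sppOf f tle g) (sppOf f tle a)

/-- `G` is a rewrite basis in the term `u` (for the rewrite order `ro`). -/
def IsRBIn
    (ro : Term n m × MvPolynomial (Fin n) K → Term n m × MvPolynomial (Fin n) K → Prop)
    (G : Set (Fin m → MvPolynomial (Fin n) K)) (u : Term n m) : Prop :=
  IsSyzSig f tle u ∨
    ∃ g, IsCanonRewriter f tle ro G u g ∧
      RegTopIrred f ple tle G (monomMul (1 : K) (u.1 - (sig tle g).1) g)

/-- `G` is a rewrite basis up to the term `u` (for the rewrite order `ro`). -/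
def IsRBUpto
    (ro : Term n m × MvPolynomial (Fin n) K → Term n m × MvPolynomial (Fin n) K → Prop)
    (G : Set (Fin m → MvPolynomial (Fin n) K)) (u : Term n m) : Prop :=
  ∀ v, strict tle v u → IsRBIn f ple tle ro G v

/-- The S-pair of two module elements. -/
noncomputable def spair (a b : Fin m → MvPolynomial (Fin n) K) :
    Fin m → MvPolynomial (Fin n) K :=
  monomMul ((1 : K) / lc ple (bar f a))
      (lcmPP (lp ple (bar f a)) (lp ple (bar f b)) - lp ple (bar f a)) a -
    monomMul ((1 : K) / lc ple (bar f b))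
      (lcmPP (lp ple (bar f a)) (lp ple (bar f b)) - lp ple (bar f b)) b

/-- `a` and `b` give rise to a regular S-pair. -/
def IsRegularSPair (a b : Fin m → MvPolynomial (Fin n) K) : Prop :=
  bar f a ≠ 0 ∧ bar f b ≠ 0 ∧
    mulTerm (lcmPP (lp ple (bar f a)) (lp ple (bar f b)) - lp ple (bar f a)) (sig tle a) ≠
      mulTerm (lcmPP (lp ple (bar f a)) (lp ple (bar f b)) - lp ple (bar f b)) (sig tle b)

/-- `B` is a Gröbner basis of the ideal `I` w.r.t. `ple`. -/
def IsGroebnerBasis (B : Set (MvPolynomial (Fin n) K)) (I : Ideal (MvPolynomial (Fin n) K)) :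
    Prop :=
  (∀ b ∈ B, b ∈ I) ∧ Ideal.span B = I ∧
    ∀ p ∈ I, p ≠ 0 → ∃ b ∈ B, b ≠ 0 ∧ ∃ t : PP n, lp ple p = t + lp ple b

/-- One step of ordinary polynomial reduction of `p` to `q` modulo `B`. -/
def PolyRedStep (B : Set (MvPolynomial (Fin n) K)) (p q : MvPolynomial (Fin n) K) : Prop :=
  ∃ r ∈ B, r ≠ 0 ∧ ∃ t : PP n, MvPolynomial.coeff (t + lp ple r) p ≠ 0 ∧
    q = p - MvPolynomial.monomial t (MvPolynomial.coeff (t + lp ple r) p / lc ple r) * r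

/-! Suppose `v ≺_t u` is not a syzygy signature. Then neither is its divisor `e_i`, where `i` is
the component of `v`, so `G` has an element whose signature divides `e_i` and hence `v`. As only
finitely many terms divide `v` and the signatures of `G` are distinct, there is a canonical
rewriter `g` in `v`. If a multiple `t·g` is regular top reducible by `h ∈ G`, then so is `s·g`,
where `s` is the cofactor of `g` in `spair(g, h)`; moreover `s ∣ t`, and `s ⊗ 𝔰(g)` is the
signature of that S-pair. For `v = t ⊗ 𝔰(g)`, the element `g` remains the canonical rewriter in
the divisor `s ⊗ 𝔰(g)` of `v`. As `G` is a rewrite basis there and `s·g` is reducible,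
`s ⊗ 𝔰(g)` is a syzygy signature, and so is its multiple `v`. -/

theorem exists_forall_rel_of_finite {α : Type*} {r : α → α → Prop} {s : Set α} (hs : s.Finite)
    (hne : s.Nonempty) (htotal : ∀ x ∈ s, ∀ y ∈ s, r x y ∨ r y x)
    (htrans : ∀ x ∈ s, ∀ y ∈ s, ∀ z ∈ s, r x y → r y z → r x z) :
    ∃ x ∈ s, ∀ y ∈ s, r y x := by
  have := hs.to_subtype
  have := hne.to_subtype
  let r' : s → s → Prop := fun x y => r x y
  have : IsTrans s r' := ⟨fun x y z => htrans x x.2 y y.2 z z.2⟩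
  have hrefl : ∀ x, r' x x := fun x => (htotal x x.2 x x.2).elim id id
  have hdir : Directed r' (id : s → s) := fun x y => (htotal x x.2 y y.2).elim
    (fun hxy => ⟨y, hxy, hrefl y⟩) (fun hyx => ⟨x, hrefl x, hyx⟩)
  obtain ⟨x, hx⟩ := hdir.finite_le (id : s → s)
  exact ⟨x, x.2, fun y hy => hx ⟨y, hy⟩⟩

theorem exists_eq_add_lcmPP_tsub {s t p q : PP n} (h : s + p = t + q) :
    ∃ r, s = r + (lcmPP p q - p) ∧ t = r + (lcmPP p q - q) := by
  refine ⟨s + p - lcmPP p q, ?_, ?_⟩ <;> ext i <;> have hi := DFunLike.congr_fun h i <;>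
    simp only [lcmPP, Finsupp.add_apply, Finsupp.tsub_apply, Finsupp.zipWith_apply] at hi ⊢ <;>
    omega

theorem lcmPP_tsub_add_eq (p q : PP n) : lcmPP p q - p + p = lcmPP p q - q + q := by
  ext i
  simp only [lcmPP, Finsupp.add_apply, Finsupp.tsub_apply, Finsupp.zipWith_apply]
  omega

section RewriteBasis

variable {f ple tle} {G : Set (Fin m → MvPolynomial (Fin n) K)}
  {a b g h : Fin m → MvPolynomial (Fin n) K} {c : K} {s t : PP n} {u v w : Term n m}
  {ro : Term n m × MvPolynomial (Fin n) K → Term n m × MvPolynomial (Fin n) K → Prop}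

section Terms

omit [NeZero m]

theorem mulTerm_mulTerm (s t : PP n) (u : Term n m) :
    mulTerm s (mulTerm t u) = mulTerm (s + t) u := by
  simp only [mulTerm, add_assoc]

theorem mulTerm_injective (t : PP n) :
    Function.Injective (mulTerm t : Term n m → Term n m) := fun u v huv => by
  simpa [mulTerm, Prod.ext_iff] using huv

theorem termDvd.trans (huv : termDvd u v) (hvw : termDvd v w) : termDvd u w := by
  obtain ⟨s, rfl⟩ := huv
  obtain ⟨t, rfl⟩ := hvw
  exact ⟨t + s, mulTerm_mulTerm t s u⟩

theorem termDvd_mulTerm (t : PP n) (u : Term n m) : termDvd u (mulTerm t u) := ⟨t, rfl⟩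

theorem termDvd_mulTerm_of_le (hst : s ≤ t) (u : Term n m) :
    termDvd (mulTerm s u) (mulTerm t u) :=
  ⟨t - s, by rw [mulTerm_mulTerm, tsub_add_cancel_of_le hst]⟩

theorem unit_termDvd (u : Term n m) : termDvd ((0 : PP n), u.2) u :=
  ⟨u.1, by simp only [mulTerm, add_zero]⟩

theorem finite_setOf_termDvd (u : Term n m) : {w | termDvd w u}.Finite := by
  refine ((Set.finite_Icc 0 u.1).image fun r => (r, u.2)).subset ?_
  rintro w ⟨t, rfl⟩
  exact ⟨w.1, ⟨zero_le, le_add_self⟩, rfl⟩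

namespace OrdersOK

theorem tle_of_termDvd (hord : OrdersOK ple tle) (huv : termDvd u v) : tle u v := by
  obtain ⟨t, rfl⟩ := huv
  have hple : ple u.1 (t + u.1) := by
    simpa only [add_zero, add_comm] using hord.ple_mul u.1 0 t (hord.ple_one_le t)
  exact hord.tle_compat _ _ _ _ hple le_rfl

theorem strict_mulTerm_iff (hord : OrdersOK ple tle) (t : PP n) :
    strict tle (mulTerm t u) (mulTerm t v) ↔ strict tle u v := by
  constructor
  · rintro ⟨hle, hne⟩
    refine ⟨(hord.tle_total u v).resolve_right fun hvu => ?_, fun huv => hne (huv ▸ rfl)⟩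
    exact hne (hord.tle_antisymm _ _ hle (hord.tle_mul t v u hvu))
  · rintro ⟨hle, hne⟩
    exact ⟨hord.tle_mul t u v hle, (mulTerm_injective t).ne hne⟩

theorem strict_of_tle_of_strict (hord : OrdersOK ple tle) (huv : tle u v)
    (hvw : strict tle v w) : strict tle u w := by
  refine ⟨hord.tle_trans u v w huv hvw.1, ?_⟩
  rintro rfl
  exact hvw.2 (hord.tle_antisymm _ _ hvw.1 huv)

end OrdersOK

end Terms

section LeadingPowerProduct

variable {p : MvPolynomial (Fin n) K}

omit [NeZero m]

theorem exists_of_coeff_monomial_mul_ne_zero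
    (hs : MvPolynomial.coeff s (MvPolynomial.monomial t c * p) ≠ 0) :
    ∃ r, s = t + r ∧ MvPolynomial.coeff r p ≠ 0 := by
  rw [MvPolynomial.coeff_monomial_mul'] at hs
  split_ifs at hs with hle
  · exact ⟨s - t, (add_tsub_cancel_of_le hle).symm, right_ne_zero_of_mul hs⟩
  · exact absurd rfl hs

namespace OrdersOK

theorem lp_spec (hord : OrdersOK ple tle) (hp : p ≠ 0) :
    MvPolynomial.coeff (lp ple p) p ≠ 0 ∧
      ∀ s, MvPolynomial.coeff s p ≠ 0 → ple s (lp ple p) := by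
  have hmax : ∃ t, MvPolynomial.coeff t p ≠ 0 ∧ ∀ s, MvPolynomial.coeff s p ≠ 0 → ple s t :=
    exists_forall_rel_of_finite (s := {t | MvPolynomial.coeff t p ≠ 0})
      (p.support.finite_toSet.subset fun t ht => MvPolynomial.mem_support_iff.mpr ht)
      (MvPolynomial.ne_zero_iff.mp hp)
      (fun x _ y _ => hord.ple_total x y) (fun x _ y _ z _ => hord.ple_trans x y z)
  rw [lp, dif_pos hmax]
  exact hmax.choose_spec

theorem lp_monomial_mul (hord : OrdersOK ple tle) (hc : c ≠ 0) (t : PP n) (hp : p ≠ 0) :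
    lp ple (MvPolynomial.monomial t c * p) = t + lp ple p := by
  have hmul := hord.lp_spec
    (mul_ne_zero ((MvPolynomial.monomial_eq_zero (s := t)).not.mpr hc) hp)
  obtain ⟨r, hr, hr0⟩ := exists_of_coeff_monomial_mul_ne_zero hmul.1
  refine hord.ple_antisymm _ _ ?_ (hmul.2 _ ?_)
  · rw [hr]
    exact hord.ple_mul t _ _ ((hord.lp_spec hp).2 _ hr0)
  · rw [MvPolynomial.coeff_monomial_mul]
    exact mul_ne_zero hc (hord.lp_spec hp).1

end OrdersOK

end LeadingPowerProduct

section ModuleElements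

omit [NeZero m]

theorem ne_zero_of_bar_ne_zero (ha : bar f a ≠ 0) : a ≠ 0 := by
  rintro rfl
  simp [bar] at ha

theorem bar_monomMul (c : K) (t : PP n) (a : Fin m → MvPolynomial (Fin n) K) :
    bar f (monomMul c t a) = MvPolynomial.monomial t c * bar f a := by
  simp only [bar, monomMul, Finset.mul_sum, mul_assoc]

theorem ne_zero_of_coeffM_ne_zero (hu : coeffM a u ≠ 0) : a ≠ 0 := by
  rintro rfl
  simp [coeffM] at hu

theorem exists_coeffM_ne_zero (ha : a ≠ 0) : ∃ u, coeffM a u ≠ 0 := by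
  obtain ⟨i, hi⟩ := Function.ne_iff.mp ha
  obtain ⟨t, ht⟩ := MvPolynomial.ne_zero_iff.mp hi
  exact ⟨(t, i), ht⟩

theorem finite_setOf_coeffM_ne_zero (a : Fin m → MvPolynomial (Fin n) K) :
    {u | coeffM a u ≠ 0}.Finite := by
  refine (Set.finite_iUnion fun i : Fin m =>
    (a i).support.finite_toSet.image fun t => ((t, i) : Term n m)).subset ?_
  rintro ⟨t, i⟩ hu
  exact Set.mem_iUnion.mpr ⟨i, t, MvPolynomial.mem_support_iff.mpr hu, rfl⟩

theorem coeffM_sub (a b : Fin m → MvPolynomial (Fin n) K) (u : Term n m) :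
    coeffM (a - b) u = coeffM a u - coeffM b u :=
  MvPolynomial.coeff_sub ..

theorem coeffM_monomMul_mulTerm (c : K) (t : PP n) (a : Fin m → MvPolynomial (Fin n) K)
    (u : Term n m) : coeffM (monomMul c t a) (mulTerm t u) = c * coeffM a u :=
  MvPolynomial.coeff_monomial_mul ..

theorem exists_of_coeffM_monomMul_ne_zero (hv : coeffM (monomMul c t a) v ≠ 0) :
    ∃ w, v = mulTerm t w ∧ coeffM a w ≠ 0 := by
  obtain ⟨r, hr, hr0⟩ := exists_of_coeff_monomial_mul_ne_zero hv
  exact ⟨(r, v.2), Prod.ext hr rfl, hr0⟩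

end ModuleElements

namespace OrdersOK

theorem sig_spec (hord : OrdersOK ple tle) (ha : a ≠ 0) :
    coeffM a (sig tle a) ≠ 0 ∧ ∀ v, coeffM a v ≠ 0 → tle v (sig tle a) := by
  have hmax : ∃ u, coeffM a u ≠ 0 ∧ ∀ v, coeffM a v ≠ 0 → tle v u :=
    exists_forall_rel_of_finite (finite_setOf_coeffM_ne_zero a) (exists_coeffM_ne_zero ha)
      (fun x _ y _ => hord.tle_total x y) (fun x _ y _ z _ => hord.tle_trans x y z)
  rw [sig, dif_pos hmax]
  exact hmax.choose_spec

theorem sig_eq_of_forall_tle (hord : OrdersOK ple tle) (hu : coeffM a u ≠ 0)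
    (hmax : ∀ v, coeffM a v ≠ 0 → tle v u) : sig tle a = u := by
  have hsig := hord.sig_spec (ne_zero_of_coeffM_ne_zero hu)
  exact hord.tle_antisymm _ _ (hmax _ hsig.1) (hsig.2 _ hu)

theorem coeffM_monomMul_mulTerm_sig_ne_zero (hord : OrdersOK ple tle) (hc : c ≠ 0) (t : PP n)
    (ha : a ≠ 0) : coeffM (monomMul c t a) (mulTerm t (sig tle a)) ≠ 0 := by
  rw [coeffM_monomMul_mulTerm]
  exact mul_ne_zero hc (hord.sig_spec ha).1

theorem tle_mulTerm_sig_of_coeffM_monomMul_ne_zero (hord : OrdersOK ple tle)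
    (hv : coeffM (monomMul c t a) v ≠ 0) : tle v (mulTerm t (sig tle a)) := by
  obtain ⟨w, rfl, hw⟩ := exists_of_coeffM_monomMul_ne_zero hv
  exact hord.tle_mul t _ _ ((hord.sig_spec (ne_zero_of_coeffM_ne_zero hw)).2 w hw)

theorem monomMul_ne_zero (hord : OrdersOK ple tle) (hc : c ≠ 0) (t : PP n) (ha : a ≠ 0) :
    monomMul c t a ≠ 0 :=
  ne_zero_of_coeffM_ne_zero (hord.coeffM_monomMul_mulTerm_sig_ne_zero hc t ha)

theorem sig_monomMul (hord : OrdersOK ple tle) (hc : c ≠ 0) (t : PP n) (ha : a ≠ 0) :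
    sig tle (monomMul c t a) = mulTerm t (sig tle a) :=
  hord.sig_eq_of_forall_tle (hord.coeffM_monomMul_mulTerm_sig_ne_zero hc t ha)
    fun _ => hord.tle_mulTerm_sig_of_coeffM_monomMul_ne_zero

theorem sig_sub_eq_left (hord : OrdersOK ple tle) (ha : a ≠ 0)
    (hb : ∀ v, coeffM b v ≠ 0 → strict tle v (sig tle a)) : sig tle (a - b) = sig tle a := by
  apply hord.sig_eq_of_forall_tle
  · have hb0 : coeffM b (sig tle a) = 0 := not_not.mp fun hne => (hb _ hne).2 rfl
    rw [coeffM_sub, hb0, sub_zero]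
    exact (hord.sig_spec ha).1
  · intro v hv
    by_cases hbv : coeffM b v = 0
    · rw [coeffM_sub, hbv, sub_zero] at hv
      exact (hord.sig_spec ha).2 v hv
    · exact (hb v hbv).1

theorem sig_spair (hord : OrdersOK ple tle) (hg : bar f g ≠ 0)
    (hlt : strict tle
      (mulTerm (lcmPP (lp ple (bar f g)) (lp ple (bar f h)) - lp ple (bar f h)) (sig tle h))
      (mulTerm (lcmPP (lp ple (bar f g)) (lp ple (bar f h)) - lp ple (bar f g)) (sig tle g))) :
    sig tle (spair f ple g h) =
      mulTerm (lcmPP (lp ple (bar f g)) (lp ple (bar f h)) - lp ple (bar f g)) (sig tle g) := by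
  have hg0 := ne_zero_of_bar_ne_zero hg
  have hc : 1 / lc ple (bar f g) ≠ 0 := one_div_ne_zero (hord.lp_spec hg).1
  have hsig := hord.sig_monomMul hc
    (lcmPP (lp ple (bar f g)) (lp ple (bar f h)) - lp ple (bar f g)) hg0
  rw [spair, hord.sig_sub_eq_left (hord.monomMul_ne_zero hc _ hg0), hsig]
  intro v hv
  rw [hsig]
  exact hord.strict_of_tle_of_strict (hord.tle_mulTerm_sig_of_coeffM_monomMul_ne_zero hv) hlt

end OrdersOK

theorem IsSyzSig.of_termDvd (hord : OrdersOK ple tle) (hu : IsSyzSig f tle u)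
    (huv : termDvd u v) : IsSyzSig f tle v := by
  obtain ⟨a, ha, rfl, hbar⟩ := hu
  obtain ⟨t, rfl⟩ := huv
  exact ⟨monomMul 1 t a, hord.monomMul_ne_zero one_ne_zero t ha,
    hord.sig_monomMul one_ne_zero t ha, by rw [bar_monomMul, hbar, mul_zero]⟩

namespace OrdersOK

theorem not_regTopIrred_monomMul_iff (hord : OrdersOK ple tle) (hc : c ≠ 0) :
    ¬ RegTopIrred f ple tle G (monomMul c t g) ↔
      bar f g ≠ 0 ∧ ∃ h ∈ G, bar f h ≠ 0 ∧ ∃ t', t' + lp ple (bar f h) = t + lp ple (bar f g) ∧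
        strict tle (mulTerm t' (sig tle h)) (mulTerm t (sig tle g)) := by
  simp only [RegTopIrred, not_forall, not_not]
  constructor
  · rintro ⟨_, h, t', ⟨hhG, hh, hcoeff, -, -⟩, hreg, htop⟩
    have hg : bar f g ≠ 0 := by
      intro hg
      simp [bar_monomMul, hg] at hcoeff
    rw [RegularWith, hord.sig_monomMul hc t (ne_zero_of_bar_ne_zero hg)] at hreg
    rw [TopWith, bar_monomMul, hord.lp_monomial_mul hc t hg] at htop
    exact ⟨hg, h, hhG, hh, t', htop, hreg⟩
  · rintro ⟨hg, h, hhG, hh, t', htop, hreg⟩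
    have hsig := hord.sig_monomMul hc t (ne_zero_of_bar_ne_zero hg)
    rw [← hsig] at hreg
    refine ⟨_, h, t', ⟨hhG, hh, ?_, rfl, hreg.1⟩, hreg, ?_⟩
    · rw [htop, bar_monomMul, MvPolynomial.coeff_monomial_mul]
      exact mul_ne_zero hc (hord.lp_spec hg).1
    · rw [TopWith, bar_monomMul, hord.lp_monomial_mul hc t hg, htop]

theorem exists_isRegularSPair_of_not_regTopIrred (hord : OrdersOK ple tle) (hc : c ≠ 0)
    (hred : ¬ RegTopIrred f ple tle G (monomMul c t g)) :
    ∃ h ∈ G, IsRegularSPair f ple tle g h ∧ ∃ s ≤ t,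
      sig tle (spair f ple g h) = mulTerm s (sig tle g) ∧
        ¬ RegTopIrred f ple tle G (monomMul c s g) := by
  obtain ⟨hg, h, hhG, hh, t', htop, hlt⟩ := (hord.not_regTopIrred_monomMul_iff hc).mp hred
  obtain ⟨r, rfl, rfl⟩ := exists_eq_add_lcmPP_tsub htop.symm
  rw [← mulTerm_mulTerm, ← mulTerm_mulTerm, hord.strict_mulTerm_iff] at hlt
  refine ⟨h, hhG, ⟨hg, hh, hlt.2.symm⟩, _, le_add_self, hord.sig_spair hg hlt, ?_⟩
  exact (hord.not_regTopIrred_monomMul_iff hc).mpr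
    ⟨hg, h, hhG, hh, _, (lcmPP_tsub_add_eq _ _).symm, hlt⟩

end OrdersOK

/-- `ro` is a total preorder on sig-poly-pairs that is antisymmetric up to equality of signatures:
a rewrite order without the condition on regular top s-irreducible elements. Sig-poly-pairs are
represented by the nonzero module elements they come from. -/
structure IsSigTotalPreorder (f : Fin m → MvPolynomial (Fin n) K)
    (tle : Term n m → Term n m → Prop)
    (ro : Term n m × MvPolynomial (Fin n) K → Term n m × MvPolynomial (Fin n) K → Prop) :
    Prop where
  total : ∀ a b, a ≠ 0 → b ≠ 0 → ro (sppOf f tle a) (sppOf f tle b) ∨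
    ro (sppOf f tle b) (sppOf f tle a)
  trans : ∀ a b c, a ≠ 0 → b ≠ 0 → c ≠ 0 → ro (sppOf f tle a) (sppOf f tle b) →
    ro (sppOf f tle b) (sppOf f tle c) → ro (sppOf f tle a) (sppOf f tle c)
  sig_eq : ∀ a b, a ≠ 0 → b ≠ 0 → ro (sppOf f tle a) (sppOf f tle b) →
    ro (sppOf f tle b) (sppOf f tle a) → sig tle a = sig tle b

theorem IsRewriteOrder.isSigTotalPreorder (hro : IsRewriteOrder f ple tle ro) :
    IsSigTotalPreorder f tle ro where
  total a b ha hb := hro.2.2.1 _ _ ⟨a, ha, rfl⟩ ⟨b, hb, rfl⟩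
  trans a b c ha hb hc := hro.2.1 _ _ _ ⟨a, ha, rfl⟩ ⟨b, hb, rfl⟩ ⟨c, hc, rfl⟩
  sig_eq a b ha hb := hro.2.2.2.1 _ _ ⟨a, ha, rfl⟩ ⟨b, hb, rfl⟩

theorem finite_setOf_sig_termDvd (hinj : Set.InjOn (sig tle) (G \ {0})) (u : Term n m) :
    {g | g ∈ G ∧ g ≠ 0 ∧ termDvd (sig tle g) u}.Finite := by
  have hsub : {g | g ∈ G ∧ g ≠ 0 ∧ termDvd (sig tle g) u} ⊆ G \ {0} :=
    fun g hg => ⟨hg.1, hg.2.1⟩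
  refine Set.Finite.of_finite_image ((finite_setOf_termDvd u).subset ?_) (hinj.mono hsub)
  rintro _ ⟨g, hg, rfl⟩
  exact hg.2.2

theorem IsSigTotalPreorder.exists_isCanonRewriter (hro : IsSigTotalPreorder f tle ro)
    (hfin : {g | g ∈ G ∧ g ≠ 0 ∧ termDvd (sig tle g) u}.Finite)
    (hne : {g | g ∈ G ∧ g ≠ 0 ∧ termDvd (sig tle g) u}.Nonempty) :
    ∃ g, IsCanonRewriter f tle ro G u g := by
  obtain ⟨g, ⟨hgG, hg0, hgu⟩, hmax⟩ := exists_forall_rel_of_finite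
    (r := fun a b => ro (sppOf f tle a) (sppOf f tle b)) hfin hne
    (fun a ha b hb => hro.total a b ha.2.1 hb.2.1)
    (fun a ha b hb c hc => hro.trans a b c ha.2.1 hb.2.1 hc.2.1)
  exact ⟨g, hgG, hg0, hgu, fun h hhG hh0 hhu => hmax h ⟨hhG, hh0, hhu⟩⟩

theorem IsRBIn.isSyzSig_or_exists_isCanonRewriter (hord : OrdersOK ple tle)
    (hro : IsSigTotalPreorder f tle ro) (hinj : Set.InjOn (sig tle) (G \ {0}))
    (hu : IsRBIn f ple tle ro G u) (huv : termDvd u v) :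
    IsSyzSig f tle v ∨ ∃ g, IsCanonRewriter f tle ro G v g := by
  refine hu.imp (fun hsyz => hsyz.of_termDvd hord huv) ?_
  rintro ⟨g, ⟨hgG, hg0, hgu, -⟩, -⟩
  exact hro.exists_isCanonRewriter (finite_setOf_sig_termDvd hinj v)
    ⟨g, hgG, hg0, hgu.trans huv⟩

namespace IsCanonRewriter

theorem of_termDvd (hg : IsCanonRewriter f tle ro G v g) (hgu : termDvd (sig tle g) u)
    (huv : termDvd u v) : IsCanonRewriter f tle ro G u g :=
  ⟨hg.1, hg.2.1, hgu, fun h hhG hh0 hhu => hg.2.2.2 h hhG hh0 (hhu.trans huv)⟩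

theorem unique (hro : IsSigTotalPreorder f tle ro) (hinj : Set.InjOn (sig tle) (G \ {0}))
    (hg : IsCanonRewriter f tle ro G u g) (hh : IsCanonRewriter f tle ro G u h) : g = h := by
  obtain ⟨hgG, hg0, hgu, hgmax⟩ := hg
  obtain ⟨hhG, hh0, hhu, hhmax⟩ := hh
  exact hinj ⟨hgG, hg0⟩ ⟨hhG, hh0⟩
    (hro.sig_eq g h hg0 hh0 (hhmax g hgG hg0 hgu) (hgmax h hhG hh0 hhu))

theorem isRBIn_mulTerm_iff (hro : IsSigTotalPreorder f tle ro)
    (hinj : Set.InjOn (sig tle) (G \ {0}))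
    (hg : IsCanonRewriter f tle ro G (mulTerm t (sig tle g)) g) :
    IsRBIn f ple tle ro G (mulTerm t (sig tle g)) ↔
      IsSyzSig f tle (mulTerm t (sig tle g)) ∨ RegTopIrred f ple tle G (monomMul 1 t g) := by
  have hcofactor : (mulTerm t (sig tle g)).1 - (sig tle g).1 = t := add_tsub_cancel_right _ _
  refine or_congr_right ⟨?_, fun hirr => ⟨g, hg, by rwa [hcofactor]⟩⟩
  rintro ⟨g', hg', hirr⟩
  rwa [hg'.unique hro hinj hg, hcofactor] at hirr

end IsCanonRewriter

theorem rb_upt_of_spairs_general (hord : OrdersOK ple tle) (hro : IsSigTotalPreorder f tle ro)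
    (hinj : Set.InjOn (sig tle) (G \ {0}))
    (hsp : ∀ g₁ ∈ G, ∀ g₂ ∈ G, IsRegularSPair f ple tle g₁ g₂ →
      strict tle (sig tle (spair f ple g₁ g₂)) u →
      IsRBIn f ple tle ro G (sig tle (spair f ple g₁ g₂)))
    (hei : ∀ i : Fin m, strict tle ((0 : PP n), i) u → IsRBIn f ple tle ro G ((0 : PP n), i)) :
    IsRBUpto f ple tle ro G u := by
  intro v hvu
  have hunit : strict tle ((0 : PP n), v.2) u :=
    hord.strict_of_tle_of_strict (hord.tle_of_termDvd (unit_termDvd v)) hvu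
  obtain hsyz | ⟨g, hg⟩ :=
    (hei v.2 hunit).isSyzSig_or_exists_isCanonRewriter hord hro hinj (unit_termDvd v)
  · exact .inl hsyz
  obtain ⟨t, rfl⟩ := hg.2.2.1
  rw [hg.isRBIn_mulTerm_iff hro hinj, or_iff_not_imp_right]
  intro hred
  obtain ⟨h, hhG, hpair, s, hst, hsig, hsred⟩ :=
    hord.exists_isRegularSPair_of_not_regTopIrred one_ne_zero hred
  have hdvd : termDvd (mulTerm s (sig tle g)) (mulTerm t (sig tle g)) :=
    termDvd_mulTerm_of_le hst _
  have hgs := hg.of_termDvd (termDvd_mulTerm s _) hdvd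
  have hrb := hsp g hg.1 h hhG hpair
    (hsig ▸ hord.strict_of_tle_of_strict (hord.tle_of_termDvd hdvd) hvu)
  rw [hsig, hgs.isRBIn_mulTerm_iff hro hinj] at hrb
  exact (hrb.resolve_right hsred).of_termDvd hord hdvd

end RewriteBasis

/-- if `G` is finite, `0 ∉ G`, signatures on `G` are pairwise distinct,
`G` is a rewrite basis in the signature of every regular S-pair of elements of `G`
that is `≺_t u`, and in every `e_i ≺_t u`, then `G` is a rewrite basis up to `u`. -/
theorem rb_upt_of_spairs (hord : OrdersOK ple tle)
    (ro : Term n m × MvPolynomial (Fin n) K → Term n m × MvPolynomial (Fin n) K → Prop)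
    (hro : IsRewriteOrder f ple tle ro)
    (G : Set (Fin m → MvPolynomial (Fin n) K)) (hfin : G.Finite)
    (h0 : (0 : Fin m → MvPolynomial (Fin n) K) ∉ G)
    (hinj : ∀ g₁ ∈ G, ∀ g₂ ∈ G, sig tle g₁ = sig tle g₂ → g₁ = g₂)
    (u : Term n m)
    (hsp : ∀ g₁ ∈ G, ∀ g₂ ∈ G, IsRegularSPair f ple tle g₁ g₂ →
      strict tle (sig tle (spair f ple g₁ g₂)) u →
      IsRBIn f ple tle ro G (sig tle (spair f ple g₁ g₂)))
    (hei : ∀ i : Fin m, strict tle ((0 : PP n), i) u →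
      IsRBIn f ple tle ro G ((0 : PP n), i)) :
    IsRBUpto f ple tle ro G u :=
  rb_upt_of_spairs_general hord hro.isSigTotalPreorder
    (fun g₁ hg₁ g₂ hg₂ => hinj g₁ hg₁.1 g₂ hg₂.1) hsp hei

end

end SigGB
end

section
/- If (f_1,…,f_m) is a regular sequence in R, then every syzygy of (f_1,…,f_m) — i.e., every a = (a_1,…,a_m) ∈ R^m with a_1·f_1 + … + a_m·f_m = 0 — lies in the R-submodule of R^m generated by the Koszul syzygies f_j·e_i − f_i·e_j for 1 ≤ i < j ≤ m. -/
namespace SigGB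

noncomputable section

variable {K : Type*} [Field K] {n m : ℕ} [NeZero m]

variable (f : Fin m → MvPolynomial (Fin n) K)
variable (ple : PP n → PP n → Prop)
variable (tle : Term n m → Term n m → Prop)

/-!
If `a` is a syzygy whose last nonzero entry is `a j`, then `a j * g j` lies in the ideal of the
earlier `g i`, so regularity puts `a j` itself in that ideal. Writing `a j = ∑ i < j, c i * g i`,
the Koszul syzygies `g i • e_j - g j • e_i` combine with coefficients `c i` to cancel `a j` without
touching the entries beyond `j`.
-/

section Koszul

variable {R ι : Type*} [CommRing R] [LinearOrder ι]

/-- Regular sequences indexed by a linear order. The `g i` may generate the unit ideal, so for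
finite lists this is Mathlib's `RingTheory.Sequence.IsWeaklyRegular`. -/
def IsRegularSequence (g : ι → R) : Prop :=
  ∀ j q, q * g j ∈ Ideal.span (g '' Set.Iio j) → q ∈ Ideal.span (g '' Set.Iio j)

/-- The module of Koszul (trivial) syzygies of a family `g`; each unordered pair of indices
contributes one generator. -/
def koszulSyzygies (g : ι → R) : Submodule R (ι → R) :=
  Submodule.span R {x | ∃ i j, i < j ∧ x = g j • Pi.single i 1 - g i • Pi.single j 1}

theorem exists_mem_koszulSyzygies_apply_eq {g : ι → R} {j : ι} {q : R}
    (hq : q ∈ Ideal.span (g '' Set.Iio j)) :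
    ∃ x ∈ koszulSyzygies g, x j = q ∧ ∀ i, j < i → x i = 0 := by
  have span_le : Ideal.span (g '' Set.Iio j) ≤
      (koszulSyzygies g ⊓ Submodule.pi (Set.Ioi j) fun _ => ⊥).map (LinearMap.proj j) := by
    refine Ideal.span_le.2 (Set.image_subset_iff.2 fun i (hij : i < j) => ?_)
    refine ⟨g i • Pi.single j 1 - g j • Pi.single i 1, ⟨?_, fun l (hl : j < l) => ?_⟩, ?_⟩
    · rw [← neg_sub]
      exact neg_mem (Submodule.subset_span ⟨i, j, hij, rfl⟩)
    · simp [hl.ne', (hij.trans hl).ne']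
    · simp [hij.ne']
  obtain ⟨x, ⟨hx, hx_zero⟩, hxj⟩ := span_le hq
  exact ⟨x, hx, hxj, hx_zero⟩

variable [Fintype ι]

theorem koszulSyzygies_le_ker (g : ι → R) :
    koszulSyzygies g ≤ LinearMap.ker (Fintype.linearCombination R g) := by
  refine Submodule.span_le.2 ?_
  rintro _ ⟨i, j, -, rfl⟩
  simp [mul_comm (g j)]

theorem apply_mul_mem_span_of_mem_ker {g a : ι → R} {j : ι}
    (ha : a ∈ LinearMap.ker (Fintype.linearCombination R g)) (haj : ∀ i, j < i → a i = 0) :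
    a j * g j ∈ Ideal.span (g '' Set.Iio j) := by
  have hsum : a j * g j + ∑ i ∈ Finset.univ.erase j, a i * g i = 0 := by
    rw [Finset.add_sum_erase _ (fun i => a i * g i) (Finset.mem_univ j)]
    exact ha
  rw [eq_neg_of_add_eq_zero_left hsum]
  refine neg_mem (sum_mem fun i hi => ?_)
  rcases lt_or_gt_of_ne (Finset.ne_of_mem_erase hi) with hij | hji
  · exact Ideal.mul_mem_left _ _ (Ideal.subset_span ⟨i, hij, rfl⟩)
  · simp [haj i hji]

theorem IsRegularSequence.exists_mem_koszulSyzygies_eqOn_Ici {g a : ι → R}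
    (hg : IsRegularSequence g) {j : ι}
    (ha : a ∈ LinearMap.ker (Fintype.linearCombination R g)) (haj : ∀ i, j < i → a i = 0) :
    ∃ x ∈ koszulSyzygies g, Set.EqOn a x (Set.Ici j) := by
  obtain ⟨x, hx, hxj, hx_zero⟩ :=
    exists_mem_koszulSyzygies_apply_eq (hg j _ (apply_mul_mem_span_of_mem_ker ha haj))
  refine ⟨x, hx, fun i (hi : j ≤ i) => ?_⟩
  rcases hi.eq_or_lt with rfl | hji
  · exact hxj.symm
  · rw [haj i hji, hx_zero i hji]

theorem IsRegularSequence.mem_koszulSyzygies_of_lt {g : ι → R} (hg : IsRegularSequence g)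
    (t : WithTop ι) {a : ι → R} (ha : a ∈ LinearMap.ker (Fintype.linearCombination R g))
    (hat : ∀ i, a i ≠ 0 → i < t) : a ∈ koszulSyzygies g := by
  induction t using WellFoundedLT.induction generalizing a with
  | ind t ih =>
    rcases (Function.support a).eq_empty_or_nonempty with h_empty | h_nonempty
    · rw [Function.support_eq_empty_iff.1 h_empty]
      exact zero_mem _
    obtain ⟨j, hj, hj_max⟩ := (Function.support a).toFinite.exists_maximal h_nonempty
    have haj (i : ι) (hji : j < i) : a i = 0 :=
      by_contra fun hi => (hj_max hi hji.le).not_gt hji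
    obtain ⟨x, hx, hax⟩ := hg.exists_mem_koszulSyzygies_eqOn_Ici ha haj
    rw [← Submodule.sub_mem_iff_left _ hx]
    refine ih j (hat j hj) (sub_mem ha (koszulSyzygies_le_ker g hx)) fun i hi => ?_
    exact WithTop.coe_lt_coe.2 (not_le.1 fun hji => hi (sub_eq_zero.2 (hax hji)))

theorem regular_sequence_koszul_syzygies_general {g : ι → R} (hg : IsRegularSequence g) :
    koszulSyzygies g = LinearMap.ker (Fintype.linearCombination R g) :=
  le_antisymm (koszulSyzygies_le_ker g) fun _ ha =>
    hg.mem_koszulSyzygies_of_lt ⊤ ha fun i _ => WithTop.coe_lt_top i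

end Koszul

/-- for a regular sequence `(f_1, …, f_m)`, every syzygy lies in the
submodule generated by the Koszul syzygies `f_j·e_i − f_i·e_j` (`i < j`). -/
theorem regular_sequence_koszul_syzygies
    (hreg : ∀ j : Fin m, ∀ q : MvPolynomial (Fin n) K,
      q * f j ∈ Ideal.span (f '' {i : Fin m | i < j}) →
      q ∈ Ideal.span (f '' {i : Fin m | i < j}))
    (a : Fin m → MvPolynomial (Fin n) K) (ha : bar f a = 0) :
    a ∈ Submodule.span (MvPolynomial (Fin n) K)
      {x : Fin m → MvPolynomial (Fin n) K | ∃ i j : Fin m, i < j ∧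
        x = f j • (Pi.single i 1 : Fin m → MvPolynomial (Fin n) K) -
          f i • (Pi.single j 1 : Fin m → MvPolynomial (Fin n) K)} :=
  (regular_sequence_koszul_syzygies_general hreg).ge ha

end

end SigGB
end
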